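/- arXiv:1202.0667 — 2 statements merged into one kernel-verified Lean document; each statement's English description precedes it below -/
import Mathlib

section
/- Let G be a finite simple graph whose vertex set is partitioned into four independent sets A, B, C, D. Suppose that (i) there exists a function h₁ : C → ℤ₁₂ such that every vertex u ∈ A ∪ B having at least one neighbor in C satisfies Σ_{x ∈ N(u) ∩ C} h₁(x) ≠ 0 in ℤ₁₂; (ii) there exists a function h₂ : D → ℤ₁₃ such that every vertex u ∈ A ∪ B ∪ C having at least one neighbor in D satisfies Σ_{x ∈ N(u) ∩ D} h₂(x) ≠ 0 in ℤ₁₃; and (iii) the bipartite subgraph of G induced on A ∪ B admits an orientation of its edges in which every vertex has indegree at most 2. Then η(G) ≤ 468. -/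
/-- The sum of the values of `f` over the neighborhood of `u` in `G`. -/
noncomputable def nsum {V : Type*} [Fintype V] {M : Type*} [AddCommMonoid M]
    (G : SimpleGraph V) (f : V → M) (u : V) : M :=
  letI := Classical.decRel G.Adj
  ∑ x ∈ G.neighborFinset u, f x

/-- `G` has an additive coloring using the labels `{1, 2, …, k}`. -/
def HasAddColoring {V : Type*} [Fintype V] (G : SimpleGraph V) (k : ℕ) : Prop :=
  ∃ f : V → ℕ, (∀ v, f v ∈ Finset.Icc 1 k) ∧
    ∀ ⦃u v : V⦄, G.Adj u v → nsum G f u ≠ nsum G f v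

/-- `η(G)`: the least `k` such that `G` has an additive coloring with labels `{1, …, k}`. -/
noncomputable def eta {V : Type*} [Fintype V] (G : SimpleGraph V) : ℕ :=
  sInf {k | HasAddColoring G k}

open MvPolynomial in
theorem prod_coeff_aux {V ι : Type*} [DecidableEq V] [DecidableEq ι] (E : Finset ι) (c : ι → ℤ)
    (T : ι → Finset V) (hd : ι → V) (hT : ∀ e ∈ E, hd e ∈ T e) :
    (∏ e ∈ E, (C (c e) + ∑ x ∈ T e, X x) : MvPolynomial V ℤ).totalDegree ≤ E.card ∧
    (∀ m : V →₀ ℕ, m.degree = E.card →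
      0 ≤ coeff m (∏ e ∈ E, (C (c e) + ∑ x ∈ T e, X x) : MvPolynomial V ℤ)) ∧
    0 < coeff (∑ e ∈ E, Finsupp.single (hd e) 1)
      (∏ e ∈ E, (C (c e) + ∑ x ∈ T e, X x) : MvPolynomial V ℤ) := by
  induction E using Finset.induction_on with
  | empty =>
    refine ⟨by simp, ?_, by simp⟩
    intro m hm
    have : m = 0 := by
      rw [Finset.card_empty, Finsupp.degree_eq_zero_iff] at hm
      exact hm
    subst this
    simp
  | insert a E ha ih =>
    obtain ⟨h1, h2, h3⟩ := ih (fun e he => hT e (Finset.mem_insert_of_mem he))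
    rw [Finset.prod_insert ha, Finset.sum_insert ha, Finset.card_insert_of_notMem ha]
    set P : MvPolynomial V ℤ := ∏ e ∈ E, (C (c e) + ∑ x ∈ T e, X x) with hP
    have key : ∀ m : V →₀ ℕ, m.degree = E.card + 1 →
        coeff m ((C (c a) + ∑ x ∈ T a, X x) * P) = ∑ x ∈ T a, coeff m (X x * P) := by
      intro m hm
      have h0 : coeff m P = 0 := by
        apply coeff_eq_zero_of_totalDegree_lt
        have : m.degree = ∑ i ∈ m.support, m i := rfl
        omega
      rw [add_mul, coeff_add, coeff_C_mul, h0, mul_zero, zero_add, Finset.sum_mul, coeff_sum]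
    have pos : ∀ m : V →₀ ℕ, m.degree = E.card + 1 → ∀ x, 0 ≤ coeff m (X x * P) := by
      intro m hm x
      rw [coeff_X_mul']
      split_ifs with hx
      · apply h2
        have hle : Finsupp.single x 1 ≤ m := by
          rw [Finsupp.single_le_iff]
          have := Finsupp.mem_support_iff.1 hx
          omega
        have h4 : m - Finsupp.single x 1 + Finsupp.single x 1 = m := tsub_add_cancel_of_le hle
        have h5 := congrArg Finsupp.degree h4
        rw [map_add, Finsupp.degree_single] at h5
        omega
      · exact le_rfl
    refine ⟨?_, ?_, ?_⟩
    · refine (totalDegree_mul _ _).trans ?_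
      have : (C (c a) + ∑ x ∈ T a, X x : MvPolynomial V ℤ).totalDegree ≤ 1 := by
        refine (totalDegree_add _ _).trans (max_le (by rw [totalDegree_C]; exact zero_le_one) ?_)
        refine totalDegree_finsetSum_le ?_
        intro x _
        simp
      omega
    · intro m hm
      rw [key m hm]
      exact Finset.sum_nonneg fun x _ => pos m hm x
    · have hdeg : (Finsupp.single (hd a) 1 + ∑ e ∈ E, Finsupp.single (hd e) 1 : V →₀ ℕ).degree
          = E.card + 1 := by
        rw [map_add, map_sum]
        simp [add_comm]
      rw [key _ hdeg]
      refine Finset.sum_pos' (fun x _ => pos _ hdeg x) ⟨hd a, hT a (Finset.mem_insert_self _ _), ?_⟩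
      rw [coeff_X_mul]
      exact h3

open MvPolynomial in
theorem exists_avoid {V ι : Type*} [Finite V] [DecidableEq V] [DecidableEq ι] (E : Finset ι)
    (c : ι → ℤ) (T : ι → Finset V) (hd : ι → V) (hT : ∀ e ∈ E, hd e ∈ T e)
    (S : V → Finset ℤ) (hS : ∀ v, (E.filter fun e => hd e = v).card < (S v).card) :
    ∃ s : V → ℤ, (∀ v, s v ∈ S v) ∧ ∀ e ∈ E, c e + ∑ x ∈ T e, s x ≠ 0 := by
  obtain ⟨h1, h2, h3⟩ := prod_coeff_aux E c T hd hT
  have hdeg : (∏ e ∈ E, (C (c e) + ∑ x ∈ T e, X x) : MvPolynomial V ℤ).totalDegree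
      = (∑ e ∈ E, Finsupp.single (hd e) 1 : V →₀ ℕ).degree := by
    apply le_antisymm
    · refine h1.trans_eq ?_
      rw [map_sum]; simp
    · exact le_totalDegree (mem_support_iff.2 h3.ne')
  obtain ⟨s, hs, h⟩ := combinatorial_nullstellensatz_exists_eval_nonzero _ _ h3.ne' hdeg S (by
    intro v
    refine lt_of_eq_of_lt ?_ (hS v)
    rw [Finsupp.finsetSum_apply, Finset.card_filter]
    simp [Finsupp.single_apply])
  refine ⟨s, hs, fun e he => ?_⟩
  rw [map_prod, Finset.prod_ne_zero_iff] at h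
  simpa using h e he

theorem nsum_eq {V : Type*} [Fintype V] {M : Type*} [AddCommMonoid M]
    (G : SimpleGraph V) [DecidableRel G.Adj] (f : V → M) (u : V) :
    nsum G f u = ∑ x ∈ G.neighborFinset u, f x := by
  unfold nsum
  congr!

/-- Let the vertex set of a finite simple graph `G` be partitioned into four
independent sets `A`, `B`, `C`, `D`. Suppose (i) there is `h₁ : C → ℤ₁₂` such that
every vertex of `A ∪ B` with a neighbor in `C` has neighborhood sum over `C` nonzero
in `ℤ₁₂`; (ii) there is `h₂ : D → ℤ₁₃` such that every vertex of `A ∪ B ∪ C` with a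
neighbor in `D` has neighborhood sum over `D` nonzero in `ℤ₁₃`; and (iii) the
bipartite subgraph of `G` induced on `A ∪ B` has an orientation with all indegrees
at most `2`. Then `η(G) ≤ 468`. -/
theorem additive_coloring_four_parts
    {V : Type*} [Fintype V] [DecidableEq V] (G : SimpleGraph V) [DecidableRel G.Adj]
    (A B C D : Finset V)
    (hcover : A ∪ B ∪ C ∪ D = Finset.univ)
    (hAB : Disjoint A B) (hAC : Disjoint A C) (hAD : Disjoint A D)
    (hBC : Disjoint B C) (hBD : Disjoint B D) (hCD : Disjoint C D)
    (hindA : ∀ u ∈ A, ∀ v ∈ A, ¬G.Adj u v)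
    (hindB : ∀ u ∈ B, ∀ v ∈ B, ¬G.Adj u v)
    (hindC : ∀ u ∈ C, ∀ v ∈ C, ¬G.Adj u v)
    (hindD : ∀ u ∈ D, ∀ v ∈ D, ¬G.Adj u v)
    (hh1 : ∃ h₁ : V → ZMod 12, ∀ u ∈ A ∪ B, (∃ x ∈ C, G.Adj u x) →
      ∑ x ∈ (G.neighborFinset u).filter (· ∈ C), h₁ x ≠ 0)
    (hh2 : ∃ h₂ : V → ZMod 13, ∀ u ∈ A ∪ B ∪ C, (∃ x ∈ D, G.Adj u x) →
      ∑ x ∈ (G.neighborFinset u).filter (· ∈ D), h₂ x ≠ 0)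
    (hor : ∃ ori : Sym2 V → V, (∀ e ∈ G.edgeSet, ori e ∈ e) ∧
      ∀ v ∈ A ∪ B,
        ((G.neighborFinset v).filter fun u => u ∈ A ∪ B ∧ ori s(u, v) = v).card ≤ 2) :
    eta G ≤ 468 := by
  
  obtain ⟨h₁, hh1⟩ := hh1
  obtain ⟨h₂, hh2⟩ := hh2
  obtain ⟨ori, ho, hor⟩ := hor
  have hcov : ∀ v, v ∈ A ∨ v ∈ B ∨ v ∈ C ∨ v ∈ D := by
    intro v
    have : v ∈ A ∪ B ∪ C ∪ D := by rw [hcover]; exact Finset.mem_univ v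
    simpa [or_assoc] using this
  have nAB : ∀ v ∈ A, v ∉ B := fun v h h' => Finset.disjoint_left.1 hAB h h'
  have nAC : ∀ v ∈ A, v ∉ C := fun v h h' => Finset.disjoint_left.1 hAC h h'
  have nAD : ∀ v ∈ A, v ∉ D := fun v h h' => Finset.disjoint_left.1 hAD h h'
  have nBC : ∀ v ∈ B, v ∉ C := fun v h h' => Finset.disjoint_left.1 hBC h h'
  have nBD : ∀ v ∈ B, v ∉ D := fun v h h' => Finset.disjoint_left.1 hBD h h'
  have nCD : ∀ v ∈ C, v ∉ D := fun v h h' => Finset.disjoint_left.1 hCD h h'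
  -- the fixed labels on `C ∪ D`
  let g : V → ℕ := fun v => if v ∈ C then 13 * ((h₁ v).val + 12) else 12 * ((h₂ v).val + 13)
  let N : V → Finset V := fun v => (G.neighborFinset v).filter (· ∈ A ∪ B)
  let K : V → ℤ := fun v => ∑ x ∈ (G.neighborFinset v).filter (¬ · ∈ A ∪ B), (g x : ℤ)
  let E : Finset (V × V) := (A ×ˢ B).filter fun e => G.Adj e.1 e.2
  let S : V → Finset ℤ := fun v => if v ∈ A then {-156, -312, -468} else {156, 312, 468}
  have hE : ∀ e, e ∈ E ↔ (e.1 ∈ A ∧ e.2 ∈ B) ∧ G.Adj e.1 e.2 := by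
    intro e; simp [E, Finset.mem_product]
  have hori : ∀ e ∈ E, ori s(e.1, e.2) = e.1 ∨ ori s(e.1, e.2) = e.2 := by
    intro e he
    have := ho s(e.1, e.2) ((hE e).1 he).2
    simpa using this
  obtain ⟨s, hs, hne⟩ := exists_avoid E (fun e => K e.1 - K e.2) (fun e => N e.1 ∪ N e.2)
    (fun e => ori s(e.1, e.2)) (by
      intro e he
      obtain ⟨⟨ha, hb⟩, hadj⟩ := (hE e).1 he
      have hadj' := hadj.symm
      rcases hori e he with h | h <;> simp [N, h, ha, hb, hadj, hadj']) S (by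
      intro v
      have h3 : (S v).card = 3 := by
        simp only [S]; split_ifs <;> rfl
      rw [h3, Nat.lt_succ_iff]
      by_cases hvA : v ∈ A
      · refine le_trans ?_ (hor v (Finset.mem_union_left _ hvA))
        have key : ∀ e ∈ E, ori s(e.1, e.2) = v → e.1 = v := by
          intro e he h
          rcases hori e he with h' | h'
          · rw [← h', h]
          · have := ((hE e).1 he).1.2
            rw [← h', h] at this
            exact absurd this (nAB v hvA)
        refine Finset.card_le_card_of_injOn (fun e => e.2) ?_ ?_
        · intro e he
          obtain ⟨he, h⟩ := Finset.mem_filter.1 he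
          have h1 := key e he h
          obtain ⟨⟨ha, hb⟩, hadj⟩ := (hE e).1 he
          rw [h1] at h hadj
          rw [Sym2.eq_swap] at h
          simp [h, hb, hadj]
        · intro e he e' he' hee
          obtain ⟨he, h⟩ := Finset.mem_filter.1 he
          obtain ⟨he', h'⟩ := Finset.mem_filter.1 he'
          exact Prod.ext ((key e he h).trans (key e' he' h').symm) hee
      · have key : ∀ e ∈ E, ori s(e.1, e.2) = v → e.2 = v := by
          intro e he h
          rcases hori e he with h' | h'
          · have := ((hE e).1 he).1.1
            rw [← h', h] at this
            exact absurd this hvA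
          · rw [← h', h]
        by_cases hvB : v ∈ B
        · refine le_trans ?_ (hor v (Finset.mem_union_right _ hvB))
          refine Finset.card_le_card_of_injOn (fun e => e.1) ?_ ?_
          · intro e he
            obtain ⟨he, h⟩ := Finset.mem_filter.1 he
            have h1 := key e he h
            obtain ⟨⟨ha, hb⟩, hadj⟩ := (hE e).1 he
            rw [h1] at h hadj
            simp [h, ha, hadj.symm]
          · intro e he e' he' hee
            obtain ⟨he, h⟩ := Finset.mem_filter.1 he
            obtain ⟨he', h'⟩ := Finset.mem_filter.1 he'
            exact Prod.ext hee ((key e he h).trans (key e' he' h').symm)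
        · rw [Finset.filter_false_of_mem]
          · simp
          · intro e he h
            have := ((hE e).1 he).1.2
            rw [key e he h] at this
            exact hvB this)
  have hsA : ∀ v ∈ A, s v = -156 ∨ s v = -312 ∨ s v = -468 := by
    intro v hv
    have := hs v
    simpa [S, hv] using this
  have hsB : ∀ v ∉ A, s v = 156 ∨ s v = 312 ∨ s v = 468 := by
    intro v hv
    have := hs v
    simpa [S, hv] using this
  let f : V → ℕ := fun v => if v ∈ A ∪ B then (s v).natAbs else g v
  have hf3 : ∀ v ∈ A ∪ B, f v = 156 ∨ f v = 312 ∨ f v = 468 := by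
    intro v hv
    have : f v = (s v).natAbs := by simp only [f, if_pos hv]
    rw [this]
    by_cases hA : v ∈ A
    · have := hsA v hA; omega
    · have := hsB v hA; omega
  have hfC : ∀ v ∈ C, f v = 13 * ((h₁ v).val + 12) := by
    intro v hv
    have hn : v ∉ A ∪ B := by
      rw [Finset.mem_union]
      rintro (h | h)
      · exact nAC v h hv
      · exact nBC v h hv
    simp only [f, g, if_neg hn, if_pos hv]
  have hfD : ∀ v ∈ D, f v = 12 * ((h₂ v).val + 13) := by
    intro v hv
    have hn : v ∉ A ∪ B := by
      rw [Finset.mem_union]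
      rintro (h | h)
      · exact nAD v h hv
      · exact nBD v h hv
    have hn' : v ∉ C := fun h => nCD v h hv
    simp only [f, g, if_neg hn, if_neg hn']
  -- residues of the neighbourhood sums
  have c12 : ((12 : ℕ) : ZMod 12) = 0 := rfl
  have c13 : ((13 : ℕ) : ZMod 13) = 0 := rfl
  have h13 : ∀ u, ((nsum G f u : ℕ) : ZMod 13)
      = -∑ x ∈ (G.neighborFinset u).filter (· ∈ D), h₂ x := by
    intro u
    rw [nsum_eq, Nat.cast_sum, Finset.sum_filter, ← Finset.sum_neg_distrib]
    refine Finset.sum_congr rfl fun x _ => ?_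
    split_ifs with hx
    · rw [hfD x hx, Nat.cast_mul, Nat.cast_add, c13, ZMod.natCast_zmod_val, add_zero]
      have : ((12 : ℕ) : ZMod 13) = -1 := rfl
      rw [this, neg_one_mul]
    · rw [neg_zero]
      rcases hcov x with h | h | h | h
      · rcases hf3 x (Finset.mem_union_left _ h) with h | h | h <;> rw [h] <;> rfl
      · rcases hf3 x (Finset.mem_union_right _ h) with h | h | h <;> rw [h] <;> rfl
      · rw [hfC x h, Nat.cast_mul, c13, zero_mul]
      · exact absurd h hx
  have h12 : ∀ u, ((nsum G f u : ℕ) : ZMod 12)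
      = ∑ x ∈ (G.neighborFinset u).filter (· ∈ C), h₁ x := by
    intro u
    rw [nsum_eq, Nat.cast_sum, Finset.sum_filter]
    refine Finset.sum_congr rfl fun x _ => ?_
    split_ifs with hx
    · rw [hfC x hx, Nat.cast_mul, Nat.cast_add, c12, ZMod.natCast_zmod_val, add_zero]
      have : ((13 : ℕ) : ZMod 12) = 1 := rfl
      rw [this, one_mul]
    · rcases hcov x with h | h | h | h
      · rcases hf3 x (Finset.mem_union_left _ h) with h | h | h <;> rw [h] <;> rfl
      · rcases hf3 x (Finset.mem_union_right _ h) with h | h | h <;> rw [h] <;> rfl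
      · exact absurd h hx
      · rw [hfD x h, Nat.cast_mul, c12, zero_mul]
  have hD : ∀ u ∈ A ∪ B ∪ C, ∀ v ∈ D, G.Adj u v → nsum G f u ≠ nsum G f v := by
    intro u hu v hv hadj heq
    have h := congrArg (Nat.cast : ℕ → ZMod 13) heq
    rw [h13, h13, neg_inj, Finset.filter_false_of_mem (s := G.neighborFinset v)] at h
    · exact hh2 u hu ⟨v, hv, hadj⟩ (by simpa using h)
    · intro x hx hxD
      exact hindD v hv x hxD (by simpa using hx)
  have hC : ∀ u ∈ A ∪ B, ∀ v ∈ C, G.Adj u v → nsum G f u ≠ nsum G f v := by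
    intro u hu v hv hadj heq
    have h := congrArg (Nat.cast : ℕ → ZMod 12) heq
    rw [h12, h12, Finset.filter_false_of_mem (s := G.neighborFinset v)] at h
    · exact hh1 u hu ⟨v, hv, hadj⟩ (by simpa using h)
    · intro x hx hxD
      exact hindC v hv x hxD (by simpa using hx)
  have hsplit : ∀ u, ((nsum G f u : ℕ) : ℤ) = ∑ x ∈ N u, |s x| + K u := by
    intro u
    rw [nsum_eq, Nat.cast_sum, ← Finset.sum_filter_add_sum_filter_not _ (· ∈ A ∪ B)]
    congr 1
    · refine Finset.sum_congr rfl fun x hx => ?_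
      have hx := (Finset.mem_filter.1 hx).2
      simp only [f, if_pos hx, Int.natCast_natAbs]
    · refine Finset.sum_congr rfl fun x hx => ?_
      have hx := (Finset.mem_filter.1 hx).2
      simp only [f, if_neg hx]
  have hNA : ∀ u ∈ A, ∀ x ∈ N u, x ∉ A := by
    intro u hu x hx hxA
    exact hindA u hu x hxA (by simpa using (Finset.mem_filter.1 hx).1)
  have hNB : ∀ u ∈ B, ∀ x ∈ N u, x ∈ A := by
    intro u hu x hx
    rcases Finset.mem_union.1 (Finset.mem_filter.1 hx).2 with h | h
    · exact h
    · exact absurd (by simpa using (Finset.mem_filter.1 hx).1) (hindB u hu x h)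
  have hABe : ∀ u ∈ A, ∀ v ∈ B, G.Adj u v → nsum G f u ≠ nsum G f v := by
    intro u hu v hv hadj heq
    have h := congrArg (Nat.cast : ℕ → ℤ) heq
    rw [hsplit, hsplit] at h
    have e1 : ∑ x ∈ N u, |s x| = ∑ x ∈ N u, s x := by
      refine Finset.sum_congr rfl fun x hx => abs_of_nonneg ?_
      have := hsB x (hNA u hu x hx)
      omega
    have e2 : ∑ x ∈ N v, |s x| = -∑ x ∈ N v, s x := by
      rw [← Finset.sum_neg_distrib]
      refine Finset.sum_congr rfl fun x hx => abs_of_nonpos ?_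
      have := hsA x (hNB v hv x hx)
      omega
    have hdis : Disjoint (N u) (N v) := by
      rw [Finset.disjoint_left]
      intro x hx hx'
      exact hNA u hu x hx (hNB v hv x hx')
    apply hne (u, v) ((hE _).2 ⟨⟨hu, hv⟩, hadj⟩)
    change K u - K v + ∑ x ∈ N u ∪ N v, s x = 0
    rw [Finset.sum_union hdis]
    linarith
  apply Nat.sInf_le
  refine ⟨f, ?_, ?_⟩
  · intro v
    rw [Finset.mem_Icc]
    rcases hcov v with h | h | h | h
    · have := hf3 v (Finset.mem_union_left _ h); omega
    · have := hf3 v (Finset.mem_union_right _ h); omega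
    · have := hfC v h
      have := ZMod.val_lt (h₁ v)
      omega
    · have := hfD v h
      have := ZMod.val_lt (h₂ v)
      omega
  · intro u v hadj
    have hadj' := hadj.symm
    rcases hcov u with hu | hu | hu | hu <;> rcases hcov v with hv | hv | hv | hv
    · exact absurd hadj (hindA u hu v hv)
    · exact hABe u hu v hv hadj
    · exact hC u (by simp [hu]) v hv hadj
    · exact hD u (by simp [hu]) v hv hadj
    · exact (hABe v hv u hu hadj').symm
    · exact absurd hadj (hindB u hu v hv)
    · exact hC u (by simp [hu]) v hv hadj
    · exact hD u (by simp [hu]) v hv hadj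
    · exact (hC v (by simp [hv]) u hu hadj').symm
    · exact (hC v (by simp [hv]) u hu hadj').symm
    · exact absurd hadj (hindC u hu v hv)
    · exact hD u (by simp [hu]) v hv hadj
    · exact (hD v (by simp [hv]) u hu hadj').symm
    · exact (hD v (by simp [hv]) u hu hadj').symm
    · exact (hD v (by simp [hv]) u hu hadj').symm
    · exact absurd hadj (hindD u hu v hv)
end

section
/- Let G be a finite simple graph whose vertex set can be partitioned as V(G) = I ∪ F, where I is two-independent (the distance in G between any two distinct vertices of I is at least three) and the subgraph of G induced on F is a forest (contains no cycle). Then η(G) ≤ 4. -/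
open MvPolynomial in
/-- Coefficient positivity for products of linear forms with nonnegative linear part. -/
lemma prod_forms_coeff {σ : Type*} [Fintype σ] [DecidableEq σ] (A : σ → σ → ℤ)
    (hA : ∀ i j, 0 ≤ A i j) (hd : ∀ i, 0 < A i i) (c : σ → ℤ) (s : Finset σ) :
    (∏ i ∈ s, (∑ j, C (A i j) * X j - C (c i)) : MvPolynomial σ ℤ).totalDegree ≤ s.card ∧
    (∀ m : σ →₀ ℕ, m.degree = s.card →
      0 ≤ coeff m (∏ i ∈ s, (∑ j, C (A i j) * X j - C (c i)) : MvPolynomial σ ℤ)) ∧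
    0 < coeff (∑ i ∈ s, Finsupp.single i 1)
      (∏ i ∈ s, (∑ j, C (A i j) * X j - C (c i)) : MvPolynomial σ ℤ) := by
  induction s using Finset.induction_on with
  | empty =>
    refine ⟨by simp, ?_, by simp⟩
    intro m hm
    have : m = 0 := (Finsupp.degree_eq_zero_iff m).1 (by simpa using hm)
    simp [this]
  | insert a s ha ih =>
    obtain ⟨ih1, ih2, ih3⟩ := ih
    rw [Finset.prod_insert ha, Finset.card_insert_of_notMem ha, Finset.sum_insert ha]
    set P : MvPolynomial σ ℤ := ∏ i ∈ s, (∑ j, C (A i j) * X j - C (c i)) with hP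
    have hcoeff : ∀ m : σ →₀ ℕ, m.degree = s.card + 1 →
        coeff m ((∑ j, C (A a j) * X j - C (c a)) * P) =
          ∑ j, A a j * (if j ∈ m.support then coeff (m - Finsupp.single j 1) P else 0) := by
      intro m hm
      have h0 : coeff m P = 0 := by
        apply coeff_eq_zero_of_totalDegree_lt
        rw [← Finsupp.degree_apply, hm]
        omega
      rw [sub_mul, coeff_sub, coeff_C_mul, h0, mul_zero, sub_zero, Finset.sum_mul, coeff_sum]
      refine Finset.sum_congr rfl fun j _ => ?_
      rw [mul_assoc, coeff_C_mul, coeff_X_mul']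
    have hterm : ∀ m : σ →₀ ℕ, m.degree = s.card + 1 → ∀ j,
        0 ≤ A a j * (if j ∈ m.support then coeff (m - Finsupp.single j 1) P else 0) := by
      intro m hm j
      refine mul_nonneg (hA a j) ?_
      split_ifs with hj
      · apply ih2
        have hle : Finsupp.single j 1 ≤ m := by
          rw [Finsupp.single_le_iff]
          exact Nat.one_le_iff_ne_zero.2 (Finsupp.mem_support_iff.1 hj)
        have h2 := congrArg Finsupp.degree (tsub_add_cancel_of_le hle)
        rw [map_add, hm, Finsupp.degree_single] at h2
        omega
      · exact le_rfl
    refine ⟨?_, ?_, ?_⟩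
    · refine (totalDegree_mul _ _).trans ?_
      have h1 : (∑ j, C (A a j) * X j - C (c a) : MvPolynomial σ ℤ).totalDegree ≤ 1 := by
        refine (totalDegree_sub _ _).trans (max_le ?_ (by rw [totalDegree_C]; exact zero_le_one))
        refine totalDegree_finsetSum_le fun j _ => ?_
        refine (totalDegree_mul _ _).trans ?_
        rw [totalDegree_C, totalDegree_X]
      omega
    · intro m hm
      rw [hcoeff m hm]
      exact Finset.sum_nonneg fun j _ => hterm m hm j
    · have hdeg : (Finsupp.single a 1 + ∑ i ∈ s, Finsupp.single i 1 : σ →₀ ℕ).degree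
          = s.card + 1 := by
        simp [map_add, map_sum, add_comm]
      rw [hcoeff _ hdeg]
      refine Finset.sum_pos' (fun j _ => hterm _ hdeg j) ⟨a, Finset.mem_univ _, ?_⟩
      have hmem : a ∈ (Finsupp.single a 1 + ∑ i ∈ s, Finsupp.single i 1 : σ →₀ ℕ).support := by
        simp
      rw [if_pos hmem, add_tsub_cancel_left]
      exact mul_pos (hd a) ih3

open MvPolynomial in
/-- Avoidance lemma for nonnegative square systems with positive diagonal. -/
lemma exists_avoid_s8 {σ : Type*} [Fintype σ] [DecidableEq σ] (A : σ → σ → ℤ)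
    (hA : ∀ i j, 0 ≤ A i j) (hd : ∀ i, 0 < A i i) (c : σ → ℤ)
    (S : σ → Finset ℤ) (hS : ∀ i, 1 < (S i).card) :
    ∃ z : σ → ℤ, (∀ i, z i ∈ S i) ∧ ∀ i, ∑ j, A i j * z j ≠ c i := by
  obtain ⟨h1, -, h3⟩ := prod_forms_coeff A hA hd c Finset.univ
  have hdeg : (∑ i : σ, Finsupp.single i 1 : σ →₀ ℕ).degree = (Finset.univ : Finset σ).card := by
    simp [map_sum]
  obtain ⟨z, hz, hne⟩ := combinatorial_nullstellensatz_exists_eval_nonzero _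
    (∑ i : σ, Finsupp.single i 1 : σ →₀ ℕ) h3.ne'
    (le_antisymm (h1.trans hdeg.ge) (by
      rw [Finsupp.degree_apply]
      exact le_totalDegree (mem_support_iff.2 h3.ne')))
    S (fun i => by
      have : (∑ i : σ, Finsupp.single i 1 : σ →₀ ℕ) i = 1 := by
        simp [Finsupp.finsetSum_apply, Finsupp.single_apply]
      rw [this]; exact hS i)
  refine ⟨z, hz, fun i hi => hne ?_⟩
  rw [map_prod]
  refine Finset.prod_eq_zero (Finset.mem_univ i) ?_
  simp [hi]

/-- A forest has a parent function. -/
lemma exists_parent {W : Type*} (H : SimpleGraph W) (hH : H.IsAcyclic) :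
    ∃ p : W → W, ∀ a b, H.Adj a b → p a = b ∨ p b = a := by
  classical
  let r : W → W := fun v => (H.connectedComponentMk v).nonempty_supp.some
  have hr : ∀ v, H.Reachable v (r v) := fun v => by
    have := (H.connectedComponentMk v).nonempty_supp.some_mem
    exact (SimpleGraph.ConnectedComponent.exact this).symm
  have hex : ∀ v, ∃ q : H.Walk v (r v), q.IsPath := fun v => (hr v).exists_isPath
  choose q hq using hex
  refine ⟨fun v => (q v).snd, fun a b hab => ?_⟩
  by_cases hb : b ∈ (q a).support
  · exact Or.inl (hH.eq_snd_of_adj_start (hq a) hab hb).symm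
  · right
    have hrr : r a = r b := by
      simp only [r]
      rw [SimpleGraph.ConnectedComponent.sound hab.reachable]
    have key : ∀ (x : W) (q' : H.Walk b x), q'.IsPath → r a = x → q'.snd = a := by
      rintro x q' hq' rfl
      have hp : (SimpleGraph.Walk.cons hab.symm (q a)).IsPath := (hq a).cons hb
      have h := (hH.subsingleton_path _ _).elim ⟨_, hp⟩ ⟨q', hq'⟩
      have h' : SimpleGraph.Walk.cons hab.symm (q a) = q' := congrArg Subtype.val h
      rw [← h']
      simp
    exact key _ (q b) (hq b) hrr

/-- Forests can be additively colored from labels `{2, 4}`, with arbitrary offsets. -/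
lemma forest_coloring {W : Type*} [Fintype W] (H : SimpleGraph W) [DecidableRel H.Adj]
    (hH : H.IsAcyclic) (c : W → ℤ) :
    ∃ f : W → ℤ, (∀ v, f v = 2 ∨ f v = 4) ∧ ∀ a b, H.Adj a b →
      (∑ j, if H.Adj a j then f j else 0) + c a ≠ (∑ j, if H.Adj b j then f j else 0) + c b := by
  classical
  obtain ⟨p, hp⟩ := exists_parent H hH
  obtain ⟨col⟩ := hH.colorable_two
  let ε : W → ℤ := fun v => if col v = 0 then 1 else -1
  have hε1 : ∀ v, ε v = 1 ∨ ε v = -1 := fun v => by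
    simp only [ε]; split_ifs <;> simp
  have hεε : ∀ v, ε v * ε v = 1 := fun v => by
    rcases hε1 v with h | h <;> simp [h]
  have hεadj : ∀ a b, H.Adj a b → ε b = - ε a := fun a b hab => by
    have := col.valid hab
    simp only [ε]
    split_ifs with h1 h2 h2 <;> first | rfl | (exfalso; omega)
  let A : W → W → ℤ := fun v j =>
    if H.Adj v (p v) then (if H.Adj v j then 1 else 0) + (if H.Adj (p v) j then 1 else 0)
    else if v = j then 1 else 0
  obtain ⟨z, hz, hne⟩ := exists_avoid_s8 A
    (fun i j => by simp only [A]; split_ifs <;> norm_num)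
    (fun i => by
      simp only [A]
      split_ifs with h1 h2 h3 h3
      · norm_num
      · norm_num
      · norm_num
      · exact absurd h1.symm h3
      · norm_num
      )
    (fun v => ε v * (c v - c (p v)))
    (fun v => {ε v * 2, ε v * 4})
    (fun v => by
      rw [Finset.card_pair]
      · norm_num
      · rcases hε1 v with h | h <;> simp [h])
  have main : ∀ a, H.Adj a (p a) →
      (∑ j, if H.Adj a j then ε j * z j else 0) + c a ≠
        (∑ j, if H.Adj (p a) j then ε j * z j else 0) + c (p a) := by
    intro a ha heq
    apply hne a
    have e1 : (∑ j, if H.Adj a j then ε j * z j else 0) =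
        - ε a * ∑ j, if H.Adj a j then z j else 0 := by
      rw [Finset.mul_sum]
      refine Finset.sum_congr rfl fun j _ => ?_
      split_ifs with h
      · rw [hεadj a j h]
      · simp
    have e2 : (∑ j, if H.Adj (p a) j then ε j * z j else 0) =
        ε a * ∑ j, if H.Adj (p a) j then z j else 0 := by
      rw [Finset.mul_sum]
      refine Finset.sum_congr rfl fun j _ => ?_
      split_ifs with h
      · rw [hεadj (p a) j h, hεadj a (p a) ha, neg_neg]
      · simp
    have e3 : ∑ j, A a j * z j = (∑ j, if H.Adj a j then z j else 0) +
        ∑ j, if H.Adj (p a) j then z j else 0 := by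
      rw [← Finset.sum_add_distrib]
      refine Finset.sum_congr rfl fun j _ => ?_
      simp only [A, if_pos ha]
      split_ifs <;> ring
    rw [e1, e2] at heq
    rw [e3]
    generalize (∑ j, if H.Adj a j then z j else 0) = s at *
    generalize (∑ j, if H.Adj (p a) j then z j else 0) = t at *
    rcases hε1 a with h | h <;> rw [h] at heq ⊢ <;> linarith
  refine ⟨fun v => ε v * z v, fun v => ?_, fun a b hab => ?_⟩
  · have := hz v
    rw [Finset.mem_insert, Finset.mem_singleton] at this
    rcases this with h | h
    · left; show ε v * z v = 2; rw [h, ← mul_assoc, hεε, one_mul]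
    · right; show ε v * z v = 4; rw [h, ← mul_assoc, hεε, one_mul]
  · rcases hp a b hab with h | h
    · have := main a (h ▸ hab)
      rwa [h] at this
    · have := main b (h ▸ hab.symm)
      rw [h] at this
      exact this.symm

lemma nsum_eq_ite {V : Type*} [Fintype V] (G : SimpleGraph V) [DecidableRel G.Adj]
    (f : V → ℕ) (u : V) : nsum G f u = ∑ x, if G.Adj u x then f x else 0 := by
  classical
  unfold nsum
  rw [← Finset.sum_filter]
  refine Finset.sum_congr ?_ fun _ _ => rfl
  ext x
  simp

/-- If the vertex set of a finite simple graph `G` can be partitioned as `I ∪ F` where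
`I` is two-independent (any two distinct vertices of `I` are at distance at least three,
i.e. every walk between them has length at least `3`) and the subgraph induced on `F`
is a forest, then `η(G) ≤ 4`. -/
theorem additive_coloring_two_independent_forest
    {V : Type*} [Fintype V] (G : SimpleGraph V) (I F : Set V)
    (hpart : ∀ v, v ∈ I ↔ v ∉ F)
    (hI : ∀ u ∈ I, ∀ v ∈ I, u ≠ v → ∀ p : G.Walk u v, 3 ≤ p.length)
    (hF : (G.induce F).IsAcyclic) :
    eta G ≤ 4 := by
  classical
  apply Nat.sInf_le
  let k : V → ℕ := fun v => ∑ x, if G.Adj v x ∧ x ∉ F then 1 else 0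
  obtain ⟨g, hg, hgne⟩ := forest_coloring (G.induce F) hF (fun v => (k v : ℤ))
  let f : V → ℕ := fun v => if h : v ∈ F then (g ⟨v, h⟩).toNat else 1
  have hfF : ∀ v (h : v ∈ F), (f v = 2 ∨ f v = 4) ∧ (f v : ℤ) = g ⟨v, h⟩ := fun v h => by
    simp only [f, dif_pos h]
    rcases hg ⟨v, h⟩ with h' | h' <;> rw [h'] <;> simp
  have hfI : ∀ v, v ∉ F → f v = 1 := fun v h => by simp only [f, dif_neg h]
  -- decomposition of sums
  have hsplit : ∀ v, nsum G f v = (∑ x, if G.Adj v x ∧ x ∈ F then f x else 0) + k v := by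
    intro v
    rw [nsum_eq_ite, ← Finset.sum_add_distrib]
    refine Finset.sum_congr rfl fun x _ => ?_
    by_cases h1 : G.Adj v x <;> by_cases h2 : x ∈ F <;> simp [h1, h2, hfI]
  have heven : ∀ v, 2 ∣ ∑ x, if G.Adj v x ∧ x ∈ F then f x else 0 := by
    intro v
    refine Finset.dvd_sum fun x _ => ?_
    split_ifs with h
    · rcases (hfF x h.2).1 with h' | h' <;> rw [h'] <;> norm_num
    · exact dvd_zero _
  have hkI : ∀ u, u ∉ F → k u = 0 := by
    intro u hu
    refine Finset.sum_eq_zero fun x _ => ?_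
    rw [if_neg]
    rintro ⟨h1, h2⟩
    have := hI u ((hpart u).2 hu) x ((hpart x).2 h2) h1.ne h1.toWalk
    simp at this
  have hkF : ∀ u v, u ∉ F → G.Adj u v → k v = 1 := by
    intro u v hu huv
    have : k v = ∑ x, if x = u then 1 else 0 := by
      refine Finset.sum_congr rfl fun x _ => ?_
      by_cases hx : x = u
      · subst hx; simp [huv.symm, hu]
      · rw [if_neg hx, if_neg]
        rintro ⟨h1, h2⟩
        have := hI u ((hpart u).2 hu) x ((hpart x).2 h2) (Ne.symm hx)
          (.cons huv (.cons h1 .nil))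
        simp at this
    rw [this]; simp
  have hIF : ∀ u v, u ∉ F → G.Adj u v → nsum G f u ≠ nsum G f v := by
    intro u v hu huv
    rw [hsplit, hsplit, hkI u hu, hkF u v hu huv]
    have := heven u
    have := heven v
    omega
  have hsub : ∀ v (h : v ∈ F), ((nsum G f v : ℕ) : ℤ) =
      (∑ j : F, if (G.induce F).Adj ⟨v, h⟩ j then g j else 0) + (k v : ℤ) := by
    intro v h
    rw [hsplit]
    push_cast
    congr 1
    have h1 : (∑ x, if G.Adj v x ∧ x ∈ F then (f x : ℤ) else 0) =
        ∑ x ∈ Finset.univ.filter (· ∈ F), if G.Adj v x then (f x : ℤ) else 0 := by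
      rw [Finset.sum_filter]
      refine Finset.sum_congr rfl fun x _ => ?_
      by_cases h1 : G.Adj v x <;> by_cases h2 : x ∈ F <;> simp [h1, h2]
    rw [h1, Finset.sum_subtype (p := (· ∈ F)) _ (by simp)]
    refine Finset.sum_congr rfl fun x _ => ?_
    rw [(hfF x x.2).2]
    simp
  refine ⟨f, fun v => ?_, fun u v huv => ?_⟩
  · rw [Finset.mem_Icc]
    by_cases h : v ∈ F
    · rcases (hfF v h).1 with h' | h' <;> omega
    · rw [hfI v h]; omega
  · by_cases hu : u ∈ F
    · by_cases hv : v ∈ F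
      · intro heq
        apply hgne ⟨u, hu⟩ ⟨v, hv⟩ (by simpa using huv)
        have e := congrArg (Nat.cast : ℕ → ℤ) heq
        rw [hsub u hu, hsub v hv] at e
        exact e
      · exact (hIF v u hv huv.symm).symm
    · exact hIF u v hu huv
end
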